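/- Let p ≥ K ≥ 1, let S be a p×p real symmetric matrix, let Φ be a p×K real matrix with ΦᵀΦ = I_K, let γ ≥ 0, and let σ² be any real number. Suppose ΦᵀSΦ = V·diag(d₁,…,d_K)·Vᵀ with V a K×K orthogonal matrix and d₁ ≥ … ≥ d_K. Set Λ̂(σ²) = V·diag((d₁ − σ² − γ)₊, …, (d_K − σ² − γ)₊)·Vᵀ. Then (1/2)‖S − ΦΛ̂(σ²)Φᵀ − σ²I_p‖²_F + γ·tr(Λ̂(σ²)) = (1/2)·Σ_{k=1}^{K} ( d_k² − ((d_k − σ² − γ)₊)² ) + (p/2)·σ⁴ − σ²·tr(S) + (1/2)‖S − ΦΦᵀSΦΦᵀ‖²_F. -/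

import Mathlib

/-!
Splitting `S` into its compression `ΦᵀSΦ` and an orthogonal remainder gives, by Pythagoras,
`‖S − ΦLΦᵀ‖² = ‖L − ΦᵀSΦ‖² + ‖S − ΦΦᵀSΦΦᵀ‖²` for every `L`. When `L` and `ΦᵀSΦ` are both
diagonal in `V`, with entries `a` and `d`, the first term is `∑ₖ (aₖ − dₖ)²`. Subtracting
`σ²I` and adding `γ tr L` contributes `(σ² + γ) ∑ₖ aₖ` beyond terms independent of `L`, and
each summand `(1/2)(aₖ − dₖ)² + (σ² + γ) aₖ` equals `(1/2)(dₖ² − aₖ²)` because the positive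
part `aₖ` of `x = dₖ − σ² − γ` satisfies `aₖ² = aₖ x`.
-/

open Matrix BigOperators

/-- Squared Frobenius norm of a real matrix. -/
noncomputable def frobSq {m n : Type*} [Fintype m] [Fintype n] (M : Matrix m n ℝ) : ℝ :=
  ∑ i, ∑ j, (M i j) ^ 2

section Frobenius

variable {m n k l : Type*} [Fintype m] [Fintype n] [Fintype k] [Fintype l]

theorem frobSq_eq_trace_transpose_mul_self (A : Matrix m n ℝ) :
    frobSq A = (Aᵀ * A).trace := by
  simp only [frobSq, trace, diag_apply, mul_apply, transpose_apply, sq]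
  exact Finset.sum_comm

theorem frobSq_sub (A B : Matrix m n ℝ) :
    frobSq (A - B) = frobSq A - 2 * (Aᵀ * B).trace + frobSq B := by
  have trace_swap : (Bᵀ * A).trace = (Aᵀ * B).trace := by
    rw [← trace_transpose, transpose_mul, transpose_transpose]
  simp only [frobSq_eq_trace_transpose_mul_self, transpose_sub, Matrix.sub_mul, Matrix.mul_sub,
    trace_sub, trace_swap]
  ring

theorem frobSq_sub_smul_one [DecidableEq n] (A : Matrix n n ℝ) (c : ℝ) :
    frobSq (A - c • (1 : Matrix n n ℝ)) =
      frobSq A - 2 * c * A.trace + Fintype.card n * c ^ 2 := by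
  rw [frobSq_sub, frobSq_eq_trace_transpose_mul_self (c • (1 : Matrix n n ℝ))]
  simp only [transpose_smul, transpose_one, Matrix.mul_smul, Matrix.mul_one, trace_smul,
    trace_transpose, trace_one, smul_eq_mul]
  ring

theorem frobSq_diagonal [DecidableEq n] (a : n → ℝ) :
    frobSq (diagonal a) = ∑ i, a i ^ 2 := by
  simp only [frobSq_eq_trace_transpose_mul_self, diagonal_transpose, diagonal_mul_diagonal,
    trace_diagonal, sq]

theorem transpose_mul_conj_mul [DecidableEq k] [DecidableEq l] {U : Matrix m k ℝ}
    {W : Matrix n l ℝ} (hU : Uᵀ * U = 1) (hW : Wᵀ * W = 1) (A : Matrix k l ℝ) :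
    Uᵀ * (U * A * Wᵀ) * W = A := by
  calc Uᵀ * (U * A * Wᵀ) * W = (Uᵀ * U) * A * (Wᵀ * W) := by simp only [Matrix.mul_assoc]
    _ = A := by rw [hU, hW, Matrix.one_mul, Matrix.mul_one]

theorem trace_conj_of_transpose_mul_self [DecidableEq k] {U : Matrix m k ℝ}
    (hU : Uᵀ * U = 1) (A : Matrix k k ℝ) : (U * A * Uᵀ).trace = A.trace := by
  rw [trace_mul_cycle, hU, Matrix.one_mul]

/-- For the Frobenius inner product, `A ↦ U * A * Wᵀ` is adjoint to `B ↦ Uᵀ * B * W`. -/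
theorem trace_transpose_mul_conj (B : Matrix m n ℝ) (U : Matrix m k ℝ) (W : Matrix n l ℝ)
    (A : Matrix k l ℝ) :
    (Bᵀ * (U * A * Wᵀ)).trace = ((Uᵀ * B * W)ᵀ * A).trace := by
  rw [← Matrix.mul_assoc, trace_mul_comm]
  simp only [transpose_mul, transpose_transpose, Matrix.mul_assoc]

theorem frobSq_conj [DecidableEq k] [DecidableEq l] {U : Matrix m k ℝ} {W : Matrix n l ℝ}
    (hU : Uᵀ * U = 1) (hW : Wᵀ * W = 1) (A : Matrix k l ℝ) :
    frobSq (U * A * Wᵀ) = frobSq A := by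
  rw [frobSq_eq_trace_transpose_mul_self, trace_transpose_mul_conj,
    transpose_mul_conj_mul hU hW, frobSq_eq_trace_transpose_mul_self]

theorem frobSq_sub_conj [DecidableEq k] [DecidableEq l] {U : Matrix m k ℝ} {W : Matrix n l ℝ}
    (hU : Uᵀ * U = 1) (hW : Wᵀ * W = 1) (S : Matrix m n ℝ) (L : Matrix k l ℝ) :
    frobSq (S - U * L * Wᵀ) =
      frobSq (L - Uᵀ * S * W) + frobSq (S - U * (Uᵀ * S * W) * Wᵀ) := by
  set R := S - U * (Uᵀ * S * W) * Wᵀ with hR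
  have compression_eq_zero : Uᵀ * R * W = 0 := by
    rw [hR, Matrix.mul_sub, Matrix.sub_mul, transpose_mul_conj_mul hU hW, sub_self]
  have split : S - U * L * Wᵀ = R - U * (L - Uᵀ * S * W) * Wᵀ := by
    rw [hR, Matrix.mul_sub, Matrix.sub_mul, sub_sub_sub_cancel_right]
  rw [split, frobSq_sub, trace_transpose_mul_conj, compression_eq_zero, frobSq_conj hU hW,
    transpose_zero, Matrix.zero_mul, trace_zero]
  ring

theorem frobSq_conj_diagonal_sub_conj_diagonal [DecidableEq k] {V : Matrix n k ℝ}
    (hV : Vᵀ * V = 1) (a d : k → ℝ) :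
    frobSq (V * diagonal a * Vᵀ - V * diagonal d * Vᵀ) = ∑ i, (a i - d i) ^ 2 := by
  rw [← Matrix.sub_mul, ← Matrix.mul_sub, frobSq_conj hV hV, diagonal_sub, frobSq_diagonal]

end Frobenius

theorem sq_max_zero_eq_mul (x : ℝ) : max x 0 ^ 2 = max x 0 * x := by
  rcases le_total x 0 with hx | hx
  · rw [max_eq_right hx, zero_mul, sq, zero_mul]
  · rw [max_eq_left hx, sq]

theorem half_sq_max_sub_zero_sub_add_mul (d c : ℝ) :
    (1 / 2) * (max (d - c) 0 - d) ^ 2 + c * max (d - c) 0 =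
      (1 / 2) * (d ^ 2 - max (d - c) 0 ^ 2) := by
  linear_combination sq_max_zero_eq_mul (d - c)

theorem stmt_4_general {m n r : Type*} [Fintype m] [Fintype n] [Fintype r]
    [DecidableEq m] [DecidableEq n] [DecidableEq r]
    (S : Matrix m m ℝ) {Φ : Matrix m n ℝ} (hΦ : Φᵀ * Φ = 1) (γ σ2 : ℝ) {d : r → ℝ}
    {V : Matrix n r ℝ} (hV : Vᵀ * V = 1) (hdecomp : Φᵀ * S * Φ = V * diagonal d * Vᵀ)
    {Λhat : Matrix n n ℝ}
    (hΛhat : Λhat = V * diagonal (fun k => max (d k - σ2 - γ) 0) * Vᵀ) :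
    (1 / 2) * frobSq (S - Φ * Λhat * Φᵀ - σ2 • (1 : Matrix m m ℝ)) + γ * Λhat.trace =
      (1 / 2) * (∑ k, (d k ^ 2 - max (d k - σ2 - γ) 0 ^ 2))
        + ((Fintype.card m : ℝ) / 2) * σ2 ^ 2 - σ2 * S.trace
        + (1 / 2) * frobSq (S - Φ * Φᵀ * S * Φ * Φᵀ) := by
  have trace_Λhat : Λhat.trace = ∑ k, max (d k - σ2 - γ) 0 := by
    rw [hΛhat, trace_conj_of_transpose_mul_self hV, trace_diagonal]
  have residual : frobSq (S - Φ * Λhat * Φᵀ) = ∑ k, (max (d k - σ2 - γ) 0 - d k) ^ 2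
      + frobSq (S - Φ * Φᵀ * S * Φ * Φᵀ) := by
    rw [frobSq_sub_conj hΦ hΦ, hdecomp, hΛhat, frobSq_conj_diagonal_sub_conj_diagonal hV,
      ← hdecomp]
    simp only [Matrix.mul_assoc]
  have threshold : (1 / 2) * ∑ k, (max (d k - σ2 - γ) 0 - d k) ^ 2
      + (σ2 + γ) * ∑ k, max (d k - σ2 - γ) 0 =
      (1 / 2) * ∑ k, (d k ^ 2 - max (d k - σ2 - γ) 0 ^ 2) := by
    simp only [Finset.mul_sum, ← Finset.sum_add_distrib, sub_sub,
      half_sq_max_sub_zero_sub_add_mul]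
  rw [frobSq_sub_smul_one, residual, trace_sub, trace_conj_of_transpose_mul_self hΦ, trace_Λhat]
  linear_combination threshold

/-- Closed-form expression for the profiled objective `h(Λ̂(σ²), σ²)` in the proof of
Proposition 1:
`(1/2)‖S − ΦΛ̂(σ²)Φᵀ − σ²I‖²_F + γ tr(Λ̂(σ²))
  = (1/2)Σₖ (dₖ² − ((dₖ − σ² − γ)₊)²) + (p/2)σ⁴ − σ² tr(S) + (1/2)‖S − ΦΦᵀSΦΦᵀ‖²_F`. -/
theorem stmt_4 (p K : ℕ) (hK : 1 ≤ K) (hKp : K ≤ p)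
    (S : Matrix (Fin p) (Fin p) ℝ) (hS : S.IsSymm)
    (Φ : Matrix (Fin p) (Fin K) ℝ) (hΦ : Φᵀ * Φ = 1)
    (γ : ℝ) (hγ : 0 ≤ γ) (σ2 : ℝ)
    (d : Fin K → ℝ) (hd : Antitone d)
    (V : Matrix (Fin K) (Fin K) ℝ) (hV : Vᵀ * V = 1)
    (hdecomp : Φᵀ * S * Φ = V * Matrix.diagonal d * Vᵀ)
    (Λhat : Matrix (Fin K) (Fin K) ℝ)
    (hΛhat : Λhat = V * Matrix.diagonal (fun k => max (d k - σ2 - γ) 0) * Vᵀ) :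
    (1 / 2) * frobSq (S - Φ * Λhat * Φᵀ - σ2 • (1 : Matrix (Fin p) (Fin p) ℝ))
        + γ * Λhat.trace =
      (1 / 2) * (∑ k : Fin K, ((d k) ^ 2 - (max (d k - σ2 - γ) 0) ^ 2))
        + ((p : ℝ) / 2) * σ2 ^ 2 - σ2 * S.trace
        + (1 / 2) * frobSq (S - Φ * Φᵀ * S * Φ * Φᵀ) := by
  simpa only [Fintype.card_fin] using stmt_4_general S hΦ γ σ2 hV hdecomp hΛhat
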